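/- arXiv:1909.01399 — 2 statements merged into one kernel-verified Lean document; each statement's English description precedes it below -/
import Mathlib

section
/- (Lemma 4, first inequality.) For every continuous function z on cl Ω_γ, ∫_{Ω_γ} (Iz)² χ² dx dy ≤ 2γ ∫_{Ω_γ} z² χ² dx dy. (On Ω_γ one has |y_m| < √(2γ), and χ² is nonincreasing in |y_m| along segments toward {y_m = 0}, which stay inside Ω_γ.) -/
open MeasureTheory Real Finset Function

noncomputable section

abbrev Pt (n m : ℕ) := (Fin n → ℝ) × (Fin m → ℝ)

def pd {n m : ℕ} (v : Pt n m) (f : Pt n m → ℝ) (p : Pt n m) : ℝ :=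
  lineDeriv ℝ f p v

def pd2 {n m : ℕ} (v w : Pt n m) (f : Pt n m → ℝ) (p : Pt n m) : ℝ :=
  lineDeriv ℝ (pd v f) p w

def ex {n m : ℕ} (i : Fin n) : Pt n m := (Pi.single i 1, 0)

def ey {n m : ℕ} (j : Fin m) : Pt n m := (0, Pi.single j 1)

def lastIdx (m : ℕ) [NeZero m] : Fin m :=
  ⟨m - 1, Nat.sub_lt (Nat.pos_of_ne_zero (NeZero.ne m)) one_pos⟩

def psiF {n m : ℕ} [NeZero n] (δ α₀ : ℝ) (x0 : Fin n → ℝ) (y0 : Fin m → ℝ) (p : Pt n m) : ℝ :=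
  δ * p.1 0 + (1/2) * ∑ i ∈ univ.erase (0 : Fin n), (p.1 i - x0 i)^2
    + (1/2) * ∑ j, (p.2 j - y0 j)^2 + α₀

def chiF {n m : ℕ} [NeZero n] (lam ν δ α₀ : ℝ) (x0 : Fin n → ℝ) (y0 : Fin m → ℝ) (p : Pt n m) : ℝ :=
  Real.exp (lam * (psiF δ α₀ x0 y0 p) ^ (-ν))

def OmegaG {n m : ℕ} [NeZero n] (δ γ α₀ : ℝ) (x0 : Fin n → ℝ) (y0 : Fin m → ℝ) : Set (Pt n m) :=
  {p | 0 < p.1 0 ∧ α₀ < psiF δ α₀ x0 y0 p ∧ psiF δ α₀ x0 y0 p < α₀ + γ}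

def L0 {n m : ℕ} [NeZero n] (η₀ : ℝ) (a : Fin m → Fin m → Pt n m → ℝ)
    (φ : Pt n m → ℝ) (p : Pt n m) : ℝ :=
  (p.1 0 + η₀)⁻¹ * pd2 (ex 0) (ex 0) φ p
    + (p.1 0 + η₀) *
      ((∑ i ∈ univ.erase (0 : Fin n), pd2 (ex i) (ex i) φ p)
        - ∑ i, ∑ j, a i j p * pd2 (ey i) (ey j) φ p)

def Iop {n m : ℕ} [NeZero m] (z : Pt n m → ℝ) (p : Pt n m) : ℝ :=
  ∫ τ in (0:ℝ)..(p.2 (lastIdx m)), z (p.1, Function.update p.2 (lastIdx m) τ)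

def C2Bound {n m : ℕ} (M : ℝ) (f : Pt n m → ℝ) : Prop :=
  ContDiff ℝ 2 f ∧ ∀ p : Pt n m, |f p| ≤ M ∧ ‖fderiv ℝ f p‖ ≤ M ∧ ‖fderiv ℝ (fderiv ℝ f) p‖ ≤ M

section SquareIntegral

/-- Cauchy–Schwarz against the constant function on a set of finite measure. -/
lemma sq_setIntegral_le {X : Type*} [MeasurableSpace X] {μ : Measure X} {s : Set X}
    (hs : μ s ≠ ⊤) {f : X → ℝ} (hf : IntegrableOn f s μ)
    (hf2 : IntegrableOn (fun x => f x ^ 2) s μ) :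
    (∫ x in s, f x ∂μ) ^ 2 ≤ μ.real s * ∫ x in s, f x ^ 2 ∂μ := by
  set c := μ.real s with hc
  set I := ∫ x in s, f x ∂μ with hI
  have hc0 : 0 ≤ c := measureReal_nonneg
  rcases hc0.eq_or_lt with h0 | hpos
  · have hμ : μ s = 0 := (measureReal_eq_zero_iff hs).1 h0.symm
    have hI0 : I = 0 := setIntegral_measure_zero f hμ
    simp [hI0, ← h0]
  · have hconst : IntegrableOn (fun _ : X => I ^ 2) s μ := integrableOn_const hs
    have hexp : ∫ x in s, (c * f x - I) ^ 2 ∂μ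
        = c ^ 2 * (∫ x in s, f x ^ 2 ∂μ) - 2 * c * I * I + c * I ^ 2 := by
      have : (fun x => (c * f x - I) ^ 2)
          = fun x => (c ^ 2 * f x ^ 2 - 2 * c * I * f x) + I ^ 2 := by
        funext x; ring
      rw [this, integral_add (f := fun x => c ^ 2 * f x ^ 2 - 2 * c * I * f x)
          ((hf2.const_mul _).sub (hf.const_mul _)) hconst,
        integral_sub (hf2.const_mul _) (hf.const_mul _), integral_const_mul, integral_const_mul,
        setIntegral_const, smul_eq_mul]
    have hnn : 0 ≤ ∫ x in s, (c * f x - I) ^ 2 ∂μ := integral_nonneg fun x => sq_nonneg _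
    rw [hexp] at hnn
    have : 0 ≤ c * (c * (∫ x in s, f x ^ 2 ∂μ) - I ^ 2) := by linarith
    linarith [nonneg_of_mul_nonneg_right this hpos]

lemma lintegral_Ioo_ofReal_abs {r : ℝ} (hr : 0 ≤ r) :
    ∫⁻ t in Set.Ioo (-r) r, ENNReal.ofReal |t| = ENNReal.ofReal (r ^ 2) := by
  have hint : IntervalIntegrable (fun t : ℝ => |t|) volume (-r) r :=
    continuous_abs.intervalIntegrable _ _
  have hval : ∫ t in (-r)..r, |t| = r ^ 2 := by
    rw [← intervalIntegral.integral_add_adjacent_intervals (b := 0)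
      (continuous_abs.intervalIntegrable _ _) (continuous_abs.intervalIntegrable _ _)]
    have h1 : ∫ t in (-r)..0, |t| = ∫ t in (-r)..0, -t :=
      intervalIntegral.integral_congr fun t ht => by
        rw [Set.uIcc_of_le (by linarith)] at ht
        exact abs_of_nonpos ht.2
    have h2 : ∫ t in (0 : ℝ)..r, |t| = ∫ t in (0 : ℝ)..r, t :=
      intervalIntegral.integral_congr fun t ht => by
        rw [Set.uIcc_of_le hr] at ht
        exact abs_of_nonneg ht.1
    rw [h1, h2, intervalIntegral.integral_neg, integral_id, integral_id]
    ring
  rw [← hval, intervalIntegral.integral_of_le (by linarith), ← restrict_Ioo_eq_restrict_Ioc]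
  refine (ofReal_integral_eq_lintegral_ofReal ?_ ?_).symm
  · exact ((intervalIntegrable_iff_integrableOn_Ioo_of_le (by linarith)).1 hint)
  · exact Filter.Eventually.of_forall fun t => abs_nonneg t

end SquareIntegral

section Geometry

variable {n m : ℕ} [NeZero n] {δ γ α₀ lam ν : ℝ} {x0 : Fin n → ℝ} {y0 : Fin m → ℝ}

lemma continuous_psiF : Continuous (psiF δ α₀ x0 y0) := by
  unfold psiF
  fun_prop

lemma isOpen_OmegaG : IsOpen (OmegaG δ γ α₀ x0 y0) := by
  have h0 : Continuous fun p : Pt n m => p.1 0 := by fun_prop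
  exact (isOpen_lt continuous_const h0).inter
    ((isOpen_lt continuous_const continuous_psiF).inter
      (isOpen_lt continuous_psiF continuous_const))

lemma lt_psiF (hδ : 0 < δ) {p : Pt n m} (hp : 0 < p.1 0) : α₀ < psiF δ α₀ x0 y0 p := by
  have h1 : 0 ≤ ∑ i ∈ univ.erase (0 : Fin n), (p.1 i - x0 i) ^ 2 :=
    sum_nonneg fun i _ => sq_nonneg _
  have h2 : 0 ≤ ∑ j, (p.2 j - y0 j) ^ 2 := sum_nonneg fun i _ => sq_nonneg _
  have h3 : 0 < δ * p.1 0 := mul_pos hδ hp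
  unfold psiF
  linarith

lemma psiF_update {l : Fin m} (hl : y0 l = 0) (x : Fin n → ℝ) (y : Fin m → ℝ) (τ : ℝ) :
    psiF δ α₀ x0 y0 (x, update y l τ) = psiF δ α₀ x0 y0 (x, y) + (τ ^ 2 - y l ^ 2) / 2 := by
  have hsum : ∑ j ∈ univ.erase l, (update y l τ j - y0 j) ^ 2
      = ∑ j ∈ univ.erase l, (y j - y0 j) ^ 2 :=
    sum_congr rfl fun j hj => by rw [update_of_ne (ne_of_mem_erase hj)]
  unfold psiF
  simp only
  rw [← add_sum_erase univ (fun j => (update y l τ j - y0 j) ^ 2) (mem_univ l),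
    ← add_sum_erase univ (fun j => (y j - y0 j) ^ 2) (mem_univ l), hsum]
  simp only [update_self, hl]
  ring

lemma update_mem_OmegaG (hδ : 0 < δ) {l : Fin m} (hl : y0 l = 0) {x : Fin n → ℝ}
    {y : Fin m → ℝ} {τ : ℝ} (hp : (x, y) ∈ OmegaG δ γ α₀ x0 y0) (hτ : τ ^ 2 ≤ y l ^ 2) :
    (x, update y l τ) ∈ OmegaG δ γ α₀ x0 y0 := by
  refine ⟨hp.1, lt_psiF hδ hp.1, ?_⟩
  rw [psiF_update hl]
  linarith [hp.2.2]

lemma chiF_le_update (hδ : 0 < δ) (hα₀ : 0 < α₀) (hlam : 0 ≤ lam) (hν : 0 ≤ ν)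
    {l : Fin m} (hl : y0 l = 0) {x : Fin n → ℝ} {y : Fin m → ℝ} {τ : ℝ} (hx : 0 < x 0)
    (hτ : τ ^ 2 ≤ y l ^ 2) :
    chiF lam ν δ α₀ x0 y0 (x, y) ≤ chiF lam ν δ α₀ x0 y0 (x, update y l τ) := by
  refine Real.exp_le_exp.2 (mul_le_mul_of_nonneg_left ?_ hlam)
  refine Real.rpow_le_rpow_of_nonpos ?_ ?_ (by linarith)
  · exact hα₀.trans (lt_psiF hδ hx)
  · rw [psiF_update hl]
    linarith

lemma sq_sub_lt_of_mem_OmegaG (hδ : 0 < δ) {p : Pt n m} (hp : p ∈ OmegaG δ γ α₀ x0 y0) :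
    δ * p.1 0 < γ ∧ (∀ i, i ≠ 0 → (p.1 i - x0 i) ^ 2 < 2 * γ) ∧
      ∀ j, (p.2 j - y0 j) ^ 2 < 2 * γ := by
  have h1 : 0 ≤ ∑ i ∈ univ.erase (0 : Fin n), (p.1 i - x0 i) ^ 2 :=
    sum_nonneg fun i _ => sq_nonneg _
  have h2 : 0 ≤ ∑ j, (p.2 j - y0 j) ^ 2 := sum_nonneg fun i _ => sq_nonneg _
  have h3 : 0 < δ * p.1 0 := mul_pos hδ hp.1
  have h4 := hp.2.2
  unfold psiF at h4
  refine ⟨by linarith, fun i hi => ?_, fun j => ?_⟩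
  · have := single_le_sum (f := fun i => (p.1 i - x0 i) ^ 2) (fun i _ => sq_nonneg _)
      (mem_erase.2 ⟨hi, mem_univ i⟩)
    linarith
  · have := single_le_sum (f := fun j => (p.2 j - y0 j) ^ 2) (fun j _ => sq_nonneg _)
      (mem_univ j)
    linarith

lemma isBounded_OmegaG (hδ : 0 < δ) : Bornology.IsBounded (OmegaG δ γ α₀ x0 y0) := by
  refine (Metric.isBounded_closedBall (x := (update x0 0 0, y0))
    (r := max (γ / δ) (√(2 * γ)))).subset fun p hp => ?_
  obtain ⟨h0, hx, hy⟩ := sq_sub_lt_of_mem_OmegaG hδ hp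
  have hr : 0 ≤ max (γ / δ) (√(2 * γ)) := le_max_of_le_right (Real.sqrt_nonneg _)
  rw [Metric.mem_closedBall, Prod.dist_eq]
  refine max_le ((dist_pi_le_iff hr).2 fun i => ?_) ((dist_pi_le_iff hr).2 fun j => ?_)
  · rw [Real.dist_eq]
    by_cases hi : i = 0
    · subst hi
      refine le_max_of_le_left ?_
      simp only [update_self, sub_zero]
      rw [abs_of_pos hp.1, le_div_iff₀ hδ]
      linarith
    · simp only [update_of_ne hi]
      exact le_max_of_le_right (Real.abs_le_sqrt (hx i hi).le)
  · rw [Real.dist_eq]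
    exact le_max_of_le_right (Real.abs_le_sqrt (hy j).le)

lemma continuousOn_chiF (hα₀ : 0 < α₀) :
    ContinuousOn (chiF lam ν δ α₀ x0 y0) (closure (OmegaG δ γ α₀ x0 y0)) := by
  have hsub : closure (OmegaG δ γ α₀ x0 y0) ⊆ {p | α₀ ≤ psiF δ α₀ x0 y0 p} :=
    closure_minimal (fun p hp => hp.2.1.le) (isClosed_le continuous_const continuous_psiF)
  refine Real.continuous_exp.comp_continuousOn (continuousOn_const.mul ?_)
  exact continuous_psiF.continuousOn.rpow_const fun p hp => Or.inl (hα₀.trans_le (hsub hp)).ne'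

end Geometry

section WeightedPrimitive

variable {n m : ℕ} [NeZero n] {δ γ α₀ lam ν : ℝ} {x0 : Fin n → ℝ} {y0 : Fin m → ℝ}

/-- The weighted energy density `z² χ²` extended by zero outside `Ω_γ`. -/
def energyDensity (δ γ α₀ lam ν : ℝ) (x0 : Fin n → ℝ) (y0 : Fin m → ℝ) (z : Pt n m → ℝ) :
    Pt n m → ENNReal :=
  (OmegaG δ γ α₀ x0 y0).indicator
    fun p => ENNReal.ofReal (z p ^ 2 * chiF lam ν δ α₀ x0 y0 p ^ 2)

lemma measurable_energyDensity (hα₀ : 0 < α₀) {z : Pt n m → ℝ}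
    (hz : ContinuousOn z (closure (OmegaG δ γ α₀ x0 y0))) :
    Measurable (energyDensity δ γ α₀ lam ν x0 y0 z) := by
  classical
  unfold energyDensity
  rw [← Set.piecewise_eq_indicator]
  refine ContinuousOn.measurable_piecewise ?_ continuousOn_const isOpen_OmegaG.measurableSet
  exact ENNReal.continuous_ofReal.comp_continuousOn
    (((hz.pow 2).mul ((continuousOn_chiF hα₀).pow 2)).mono subset_closure)

/-- On each fibre the squared weighted primitive is at most `|y_m|` times the fibre energy. -/
lemma ofReal_sq_Iop_mul_le [NeZero m] (hδ : 0 < δ) (hα₀ : 0 < α₀) (hlam : 0 ≤ lam) (hν : 0 ≤ ν)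
    (hy0 : y0 (lastIdx m) = 0) {z : Pt n m → ℝ}
    (hz : ContinuousOn z (closure (OmegaG δ γ α₀ x0 y0))) {p : Pt n m}
    (hp : p ∈ OmegaG δ γ α₀ x0 y0) :
    ENNReal.ofReal (Iop z p ^ 2 * chiF lam ν δ α₀ x0 y0 p ^ 2) ≤
      ENNReal.ofReal |p.2 (lastIdx m)| *
        ∫⁻ τ, energyDensity δ γ α₀ lam ν x0 y0 z (p.1, update p.2 (lastIdx m) τ) := by
  obtain ⟨x, y⟩ := p
  simp only
  set l := lastIdx m
  set t := y l with ht
  have hsq : ∀ τ ∈ Set.uIcc 0 t, τ ^ 2 ≤ t ^ 2 := fun τ hτ => by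
    have := Set.abs_sub_left_of_mem_uIcc hτ
    rw [sub_zero, sub_zero] at this
    exact sq_le_sq.2 this
  have hmem : ∀ τ ∈ Set.uIcc 0 t, (x, update y l τ) ∈ OmegaG δ γ α₀ x0 y0 := fun τ hτ =>
    update_mem_OmegaG hδ hy0 hp (hsq τ hτ)
  set f : ℝ → ℝ := fun τ => z (x, update y l τ) with hf
  have hcont : ContinuousOn f (Set.uIcc 0 t) := by
    refine hz.comp (Continuous.continuousOn (by fun_prop)) fun τ hτ => subset_closure (hmem τ hτ)
  have hfi : IntegrableOn f (Set.uIoc 0 t) :=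
    (hcont.integrableOn_compact isCompact_uIcc).mono_set Set.uIoc_subset_uIcc
  have hf2 : IntegrableOn (fun τ => f τ ^ 2) (Set.uIoc 0 t) :=
    ((hcont.pow 2).integrableOn_compact isCompact_uIcc).mono_set Set.uIoc_subset_uIcc
  have hvol : volume.real (Set.uIoc 0 t) = |t| := by
    rw [measureReal_def, Real.volume_uIoc, sub_zero, ENNReal.toReal_ofReal (abs_nonneg t)]
  have hI : Iop z (x, y) ^ 2 ≤ |t| * ∫ τ in Set.uIoc 0 t, f τ ^ 2 := by
    have habs : |Iop z (x, y)| = |∫ τ in Set.uIoc 0 t, f τ| :=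
      intervalIntegral.abs_intervalIntegral_eq _ _ _ _
    rw [← sq_abs, habs, sq_abs, ← hvol]
    exact sq_setIntegral_le (by simp [Real.volume_uIoc]) hfi hf2
  set c := chiF lam ν δ α₀ x0 y0 (x, y) with hc
  have hc0 : 0 ≤ c := (Real.exp_pos _).le
  calc ENNReal.ofReal (Iop z (x, y) ^ 2 * c ^ 2)
      ≤ ENNReal.ofReal (|t| * ∫ τ in Set.uIoc 0 t, f τ ^ 2 * c ^ 2) := by
        rw [integral_mul_const, ← mul_assoc]
        gcongr
    _ = ENNReal.ofReal |t| * ∫⁻ τ in Set.uIoc 0 t, ENNReal.ofReal (f τ ^ 2 * c ^ 2) := by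
        rw [ENNReal.ofReal_mul (abs_nonneg t), ofReal_integral_eq_lintegral_ofReal
          (hf2.mul_const _) (Filter.Eventually.of_forall fun τ => by positivity)]
    _ ≤ ENNReal.ofReal |t| *
          ∫⁻ τ in Set.uIoc 0 t, energyDensity δ γ α₀ lam ν x0 y0 z (x, update y l τ) := by
        refine mul_le_mul_right (setLIntegral_mono' measurableSet_uIoc fun τ hτ => ?_) _
        have hτ' := Set.uIoc_subset_uIcc hτ
        rw [energyDensity, Set.indicator_of_mem (hmem τ hτ')]
        refine ENNReal.ofReal_le_ofReal (mul_le_mul_of_nonneg_left ?_ (sq_nonneg _))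
        exact pow_le_pow_left₀ hc0
          (chiF_le_update hδ hα₀ hlam hν hy0 hp.1 (hsq τ hτ')) 2
    _ ≤ _ := mul_le_mul_right (setLIntegral_le_lintegral _ _) _

lemma setLIntegral_sq_Iop_mul_le [NeZero m] (hδ : 0 < δ) (hγ : 0 ≤ γ) (hα₀ : 0 < α₀)
    (hlam : 0 ≤ lam) (hν : 0 ≤ ν) (hy0 : y0 (lastIdx m) = 0) {z : Pt n m → ℝ}
    (hz : ContinuousOn z (closure (OmegaG δ γ α₀ x0 y0))) :
    ∫⁻ p in OmegaG δ γ α₀ x0 y0, ENNReal.ofReal (Iop z p ^ 2 * chiF lam ν δ α₀ x0 y0 p ^ 2) ≤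
      ENNReal.ofReal (2 * γ) * ∫⁻ p, energyDensity δ γ α₀ lam ν x0 y0 z p := by
  set l := lastIdx m
  set G := energyDensity δ γ α₀ lam ν x0 y0 z with hGdef
  have hΩ : MeasurableSet (OmegaG δ γ α₀ x0 y0) := isOpen_OmegaG.measurableSet
  have hG : Measurable G := measurable_energyDensity hα₀ hz
  set H : Pt n m → ENNReal := (OmegaG δ γ α₀ x0 y0).indicator
    fun p => ENNReal.ofReal |p.2 l| * ∫⁻ τ, G (p.1, update p.2 l τ) with hHdef
  have hH : Measurable H := by
    refine Measurable.indicator (Measurable.mul (by fun_prop) ?_) hΩ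
    refine Measurable.lintegral_prod_right'
      (f := fun q : Pt n m × ℝ => G (q.1.1, update q.1.2 l q.2)) (hG.comp ?_)
    exact (measurable_fst.comp measurable_fst).prodMk
      (measurable_update'.comp ((measurable_snd.comp measurable_fst).prodMk measurable_snd))
  have hfib : ∀ x : Fin n → ℝ,
      ∫⁻ y, H (x, y) ≤ ∫⁻ y, ENNReal.ofReal (2 * γ) * G (x, y) := fun x => by
    refine lintegral_le_of_lmarginal_le (μ := fun _ : Fin m => (volume : Measure ℝ)) {l}
      (hH.comp measurable_prodMk_left) ((hG.comp measurable_prodMk_left).const_mul _) fun y => ?_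
    have hGy : Measurable fun τ => G (x, update y l τ) :=
      (hG.comp measurable_prodMk_left).comp (measurable_update y)
    simp only [lmarginal_singleton, lintegral_const_mul _ hGy]
    have hle : ∀ t, H (x, update y l t) ≤ (Set.Ioo (-√(2 * γ)) (√(2 * γ))).indicator
        (fun t => ENNReal.ofReal |t|) t * ∫⁻ τ, G (x, update y l τ) := fun t => by
      by_cases hmem : (x, update y l t) ∈ OmegaG δ γ α₀ x0 y0
      · have ht := (sq_sub_lt_of_mem_OmegaG hδ hmem).2.2 l
        simp only [update_self, hy0, l, sub_zero] at ht
        have ht' : t ∈ Set.Ioo (-√(2 * γ)) (√(2 * γ)) :=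
          abs_lt.1 (Real.lt_sqrt_of_sq_lt (by rwa [sq_abs]))
        rw [hHdef, Set.indicator_of_mem hmem, Set.indicator_of_mem ht']
        simp
      · rw [hHdef, Set.indicator_of_notMem hmem]
        exact zero_le
    calc ∫⁻ t, H (x, update y l t)
        ≤ ∫⁻ t, (Set.Ioo (-√(2 * γ)) (√(2 * γ))).indicator
            (fun t => ENNReal.ofReal |t|) t * ∫⁻ τ, G (x, update y l τ) := lintegral_mono hle
      _ = ENNReal.ofReal (2 * γ) * ∫⁻ τ, G (x, update y l τ) := by
          rw [lintegral_mul_const _ (Measurable.indicator (by fun_prop) measurableSet_Ioo),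
            lintegral_indicator measurableSet_Ioo,
            lintegral_Ioo_ofReal_abs (Real.sqrt_nonneg _), Real.sq_sqrt (by positivity)]
  calc ∫⁻ p in OmegaG δ γ α₀ x0 y0, ENNReal.ofReal (Iop z p ^ 2 * chiF lam ν δ α₀ x0 y0 p ^ 2)
      ≤ ∫⁻ p, H p := by
        rw [hHdef, lintegral_indicator hΩ]
        exact setLIntegral_mono' hΩ fun p hp => ofReal_sq_Iop_mul_le hδ hα₀ hlam hν hy0 hz hp
    _ = ∫⁻ x, ∫⁻ y, H (x, y) := lintegral_prod _ hH.aemeasurable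
    _ ≤ ∫⁻ x, ∫⁻ y, ENNReal.ofReal (2 * γ) * G (x, y) := lintegral_mono hfib
    _ = ∫⁻ p, ENNReal.ofReal (2 * γ) * G p :=
        (lintegral_prod _ (hG.const_mul _).aemeasurable).symm
    _ = ENNReal.ofReal (2 * γ) * ∫⁻ p, G p := lintegral_const_mul _ hG

end WeightedPrimitive

/-- (Lemma 4, first inequality.)  For every continuous function `z` on `cl Ω_γ`,
`∫_{Ω_γ} (Iz)² χ² ≤ 2γ ∫_{Ω_γ} z² χ²`, where `(Iz)(x,y) = ∫₀^{y_m} z(x,y′,τ) dτ`. -/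
theorem stmt4 (n m : ℕ) [NeZero n] [NeZero m] (hn : 2 ≤ n) (hm : 2 ≤ m)
    (δ γ α₀ lam ν : ℝ) (hδ : 4 < δ) (hγ0 : 0 < γ) (hγ1 : γ < 1)
    (hα₀ : 0 < α₀) (hγα : γ + α₀ < 1) (hlam : 0 < lam) (hν : 1 < ν)
    (x0 : Fin n → ℝ) (y0 : Fin m → ℝ) (hx0 : x0 0 = 0) (hy0 : y0 (lastIdx m) = 0)
    (z : Pt n m → ℝ) (hz : ContinuousOn z (closure (OmegaG δ γ α₀ x0 y0))) :
    ∫ p in OmegaG δ γ α₀ x0 y0, (Iop z p) ^ 2 * (chiF lam ν δ α₀ x0 y0 p) ^ 2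
      ≤ 2 * γ * ∫ p in OmegaG δ γ α₀ x0 y0, (z p) ^ 2 * (chiF lam ν δ α₀ x0 y0 p) ^ 2 := by
  have hδ0 : 0 < δ := by linarith
  have hint : IntegrableOn (fun p => z p ^ 2 * chiF lam ν δ α₀ x0 y0 p ^ 2)
      (OmegaG δ γ α₀ x0 y0) :=
    (((hz.pow 2).mul ((continuousOn_chiF hα₀).pow 2)).integrableOn_compact
      (isBounded_OmegaG hδ0).isCompact_closure).mono_set subset_closure
  have hnn : 0 ≤ ∫ p in OmegaG δ γ α₀ x0 y0, z p ^ 2 * chiF lam ν δ α₀ x0 y0 p ^ 2 :=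
    integral_nonneg fun p => by positivity
  by_cases hI : IntegrableOn (fun p => Iop z p ^ 2 * chiF lam ν δ α₀ x0 y0 p ^ 2)
      (OmegaG δ γ α₀ x0 y0)
  · refine (ENNReal.ofReal_le_ofReal_iff (by positivity)).1 ?_
    rw [ENNReal.ofReal_mul (by positivity),
      ofReal_integral_eq_lintegral_ofReal hI (Filter.Eventually.of_forall fun p => by positivity),
      ofReal_integral_eq_lintegral_ofReal hint (Filter.Eventually.of_forall fun p => by positivity),
      ← lintegral_indicator isOpen_OmegaG.measurableSet
        fun p => ENNReal.ofReal (z p ^ 2 * chiF lam ν δ α₀ x0 y0 p ^ 2)]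
    exact setLIntegral_sq_Iop_mul_le hδ0 hγ0.le hα₀ hlam.le (by linarith) hy0 hz
  · rw [integral_undef hI]
    positivity
end
end

section
/- (Pointwise estimate (26) for the term T₃.) Let m ≥ 1, n ≥ 1, and let a_{ij} (1 ≤ i,j ≤ m) be C¹ symmetric functions on an open set U ⊂ ℝⁿ×ℝᵐ with |∂a_{ij}/∂y_j| ≤ M for all i,j and satisfying −Σ_{i,j=1}^m (∂a_{ij}/∂x₁) ξ_i ξ_j ≥ α₁ |ξ|² for all ξ ∈ ℝᵐ at every point of U, with α₁ > 0. Let λ, ν, δ, ε₀, η₀ > 0 and suppose x₁ + η₀ > 0 on U. Then for every ϑ ∈ C²(U), pointwise on U: −4λνδ ϑ_{x₁} Σ_{i,j=1}^m a_{ij} ϑ_{y_iy_j} ≥ −2λνδ Σ_{i,j=1}^m [ 2 ∂_{y_j}( a_{ij} ϑ_{y_i} ϑ_{x₁} ) − ∂_{x₁}( a_{ij} ϑ_{y_i} ϑ_{y_j} ) ] + 2λνδ ( α₁ − m (x₁+η₀) ε₀ ) |∇_y ϑ|² − 2λνδ m² M² ε₀^{−1} (x₁+η₀)^{−1} ϑ_{x₁}²,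 where ∇_y ϑ = (ϑ_{y₁},…,ϑ_{y_m}). -/
open MeasureTheory Real Finset Function

noncomputable section

theorem pd_eq_fderiv {n m : ℕ} {f : Pt n m → ℝ} {p : Pt n m} (hf : DifferentiableAt ℝ f p)
    (v : Pt n m) : pd v f p = fderiv ℝ f p v :=
  hf.lineDeriv_eq_fderiv

theorem pd_eventuallyEq_fderiv {n m : ℕ} {f : Pt n m → ℝ} {p : Pt n m}
    (hf : ContDiffAt ℝ 2 f p) (v : Pt n m) :
    pd v f =ᶠ[nhds p] fun q => fderiv ℝ f q v := by
  filter_upwards [hf.eventually (by simp)] with q hq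
  exact pd_eq_fderiv (hq.differentiableAt (by norm_num)) v

theorem differentiableAt_fderiv {n m : ℕ} {f : Pt n m → ℝ} {p : Pt n m}
    (hf : ContDiffAt ℝ 2 f p) : DifferentiableAt ℝ (fderiv ℝ f) p :=
  (hf.fderiv_right (m := 1) (by norm_num)).differentiableAt (by norm_num)

theorem differentiableAt_pd {n m : ℕ} {f : Pt n m → ℝ} {p : Pt n m}
    (hf : ContDiffAt ℝ 2 f p) (v : Pt n m) : DifferentiableAt ℝ (pd v f) p :=
  ((differentiableAt_fderiv hf).clm_apply (differentiableAt_const v)).congr_of_eventuallyEq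
    (pd_eventuallyEq_fderiv hf v)

theorem pd2_eq_fderiv_fderiv {n m : ℕ} {f : Pt n m → ℝ} {p : Pt n m}
    (hf : ContDiffAt ℝ 2 f p) (v w : Pt n m) :
    pd2 v w f p = fderiv ℝ (fderiv ℝ f) p w v := by
  change pd w (pd v f) p = _
  rw [pd_eq_fderiv (differentiableAt_pd hf v), (pd_eventuallyEq_fderiv hf v).fderiv_eq,
    fderiv_clm_apply (differentiableAt_fderiv hf) (differentiableAt_const v)]
  simp

theorem pd2_comm {n m : ℕ} {f : Pt n m → ℝ} {p : Pt n m}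
    (hf : ContDiffAt ℝ 2 f p) (v w : Pt n m) : pd2 v w f p = pd2 w v f p := by
  rw [pd2_eq_fderiv_fderiv hf, pd2_eq_fderiv_fderiv hf]
  exact (hf.isSymmSndFDerivAt (by simp)) w v

/-- Leibniz rule for the directional derivative of a product of three functions. -/
theorem pd_mul_mul {n m : ℕ} {f g h : Pt n m → ℝ} {p : Pt n m} (hf : DifferentiableAt ℝ f p)
    (hg : DifferentiableAt ℝ g p) (hh : DifferentiableAt ℝ h p) (v : Pt n m) :
    pd v (fun q => f q * g q * h q) p
      = pd v f p * g p * h p + f p * pd v g p * h p + f p * g p * pd v h p := by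
  rw [pd_eq_fderiv ((hf.fun_mul hg).fun_mul hh), pd_eq_fderiv hf, pd_eq_fderiv hg,
    pd_eq_fderiv hh, fderiv_fun_mul (hf.fun_mul hg) hh, fderiv_fun_mul hf hg]
  simp
  ring

/-- The algebraic identity behind the divergence form: the terms in which the mixed derivatives
`c j` occur cancel by symmetry of `A`. -/
theorem sum_divergence_expand {ι : Type*} [Fintype ι] (A B D H : ι → ι → ℝ) (u c : ι → ℝ) (w : ℝ)
    (hA : ∀ i j, A i j = A j i) :
    ∑ i, ∑ j, (2 * (B i j * u i * w + A i j * H i j * w + A i j * u i * c j)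
        - (D i j * u i * u j + A i j * c i * u j + A i j * u i * c j))
      = 2 * (∑ i, ∑ j, B i j * u i * w) + 2 * w * (∑ i, ∑ j, A i j * H i j)
        - ∑ i, ∑ j, D i j * u i * u j := by
  have hswap : ∑ i, ∑ j, A i j * c i * u j = ∑ i, ∑ j, A i j * u i * c j := by
    rw [Finset.sum_comm]
    refine Finset.sum_congr rfl fun i _ => Finset.sum_congr rfl fun j _ => ?_
    rw [hA j i]
    ring
  have hH : w * (∑ i, ∑ j, A i j * H i j) = ∑ i, ∑ j, A i j * H i j * w := by
    simp only [Finset.mul_sum]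
    exact Finset.sum_congr rfl fun i _ => Finset.sum_congr rfl fun j _ => by ring
  simp only [Finset.sum_sub_distrib, Finset.sum_add_distrib, ← Finset.mul_sum]
  linear_combination (-1) * hswap - 2 * hH

/-- Weighted Young inequality for a cross term with a bounded coefficient. -/
theorem neg_young_le {b u w M X : ℝ} (hX : 0 < X) (hb : |b| ≤ M) :
    -(X * u ^ 2 + M ^ 2 * X⁻¹ * w ^ 2) ≤ 2 * (b * u * w) := by
  have hbM : b ^ 2 ≤ M ^ 2 := sq_le_sq' (abs_le.mp hb).1 (abs_le.mp hb).2
  have hsq : X * u ^ 2 + b ^ 2 * X⁻¹ * w ^ 2 + 2 * (b * u * w) = X⁻¹ * (X * u + b * w) ^ 2 := by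
    field_simp
    ring
  have hpos : 0 ≤ X⁻¹ * (X * u + b * w) ^ 2 := by positivity
  have hle : b ^ 2 * X⁻¹ * w ^ 2 ≤ M ^ 2 * X⁻¹ * w ^ 2 := by gcongr
  linarith

theorem neg_young_sum_le {m : ℕ} {B : Fin m → Fin m → ℝ} {u : Fin m → ℝ} {w M X : ℝ}
    (hX : 0 < X) (hB : ∀ i j, |B i j| ≤ M) :
    -(m * X * ∑ i, u i ^ 2 + m ^ 2 * M ^ 2 * X⁻¹ * w ^ 2) ≤ 2 * ∑ i, ∑ j, B i j * u i * w := by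
  have hsum : ∑ i : Fin m, ∑ _j : Fin m, -(X * u i ^ 2 + M ^ 2 * X⁻¹ * w ^ 2)
      ≤ ∑ i, ∑ j, 2 * (B i j * u i * w) :=
    Finset.sum_le_sum fun i _ => Finset.sum_le_sum fun j _ => neg_young_le hX (hB i j)
  simp only [← Finset.mul_sum, Finset.sum_neg_distrib, Finset.sum_const, Finset.card_univ,
    Fintype.card_fin, nsmul_eq_mul, Finset.sum_add_distrib] at hsum
  linarith

/-- (Pointwise estimate (26) for the term `T₃`.)  Let `a_{ij}` be `C¹` symmetric functions
on an open set `U ⊂ ℝⁿ×ℝᵐ` with `|∂a_{ij}/∂y_j| ≤ M` and satisfying the monotonicity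
condition `−Σ (∂a_{ij}/∂x₁) ξ_i ξ_j ≥ α₁|ξ|²` on `U`.  Then for every `ϑ ∈ C²(U)`,
pointwise on `U`:
`−4λνδ ϑ_{x₁} Σ a_{ij} ϑ_{y_iy_j} ≥ −2λνδ Σ [2 ∂_{y_j}(a_{ij} ϑ_{y_i} ϑ_{x₁}) − ∂_{x₁}(a_{ij} ϑ_{y_i} ϑ_{y_j})]`
`  + 2λνδ(α₁ − m(x₁+η₀)ε₀)|∇_y ϑ|² − 2λνδ m² M² ε₀^{−1} (x₁+η₀)^{−1} ϑ_{x₁}²`. -/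
theorem stmt14 (n m : ℕ) [NeZero n] [NeZero m] (hn : 1 ≤ n) (hm : 1 ≤ m)
    (M α₁ lam ν δ ε₀ η₀ : ℝ)
    (hM : 0 < M) (hα₁ : 0 < α₁) (hlam : 0 < lam) (hν : 0 < ν) (hδ : 0 < δ)
    (hε₀ : 0 < ε₀) (hη₀ : 0 < η₀)
    (U : Set (Pt n m)) (hU : IsOpen U)
    (hUx : ∀ p ∈ U, 0 < p.1 0 + η₀)
    (a : Fin m → Fin m → Pt n m → ℝ)
    (haC : ∀ i j, ContDiffOn ℝ 1 (a i j) U)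
    (hsym : ∀ i j, a i j = a j i)
    (haM : ∀ i j, ∀ p ∈ U, |pd (ey j) (a i j) p| ≤ M)
    (h4 : ∀ p ∈ U, ∀ ξ : Fin m → ℝ,
      α₁ * ∑ k, ξ k ^ 2 ≤ -(∑ i, ∑ j, pd (ex 0) (a i j) p * ξ i * ξ j))
    (θ : Pt n m → ℝ) (hθ : ContDiffOn ℝ 2 θ U) :
    ∀ p ∈ U,
      -4 * lam * ν * δ * pd (ex 0) θ p * ∑ i, ∑ j, a i j p * pd2 (ey i) (ey j) θ p
        ≥ -2 * lam * ν * δ *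
            (∑ i, ∑ j,
              (2 * pd (ey j) (fun q => a i j q * pd (ey i) θ q * pd (ex 0) θ q) p
                - pd (ex 0) (fun q => a i j q * pd (ey i) θ q * pd (ey j) θ q) p))
          + 2 * lam * ν * δ * (α₁ - m * (p.1 0 + η₀) * ε₀) * ∑ j, (pd (ey j) θ p) ^ 2
          - 2 * lam * ν * δ * m ^ 2 * M ^ 2 * ε₀⁻¹ * (p.1 0 + η₀)⁻¹ * (pd (ex 0) θ p) ^ 2 := by
  intro p hp
  have hUp : U ∈ nhds p := hU.mem_nhds hp
  have hθp : ContDiffAt ℝ 2 θ p := hθ.contDiffAt hUp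
  have hap : ∀ i j, DifferentiableAt ℝ (a i j) p := fun i j =>
    ((haC i j).contDiffAt hUp).differentiableAt (by norm_num)
  have hexpand : ∀ i j,
      2 * pd (ey j) (fun q => a i j q * pd (ey i) θ q * pd (ex 0) θ q) p
        - pd (ex 0) (fun q => a i j q * pd (ey i) θ q * pd (ey j) θ q) p
      = 2 * (pd (ey j) (a i j) p * pd (ey i) θ p * pd (ex 0) θ p
            + a i j p * pd2 (ey i) (ey j) θ p * pd (ex 0) θ p
            + a i j p * pd (ey i) θ p * pd2 (ey j) (ex 0) θ p)
        - (pd (ex 0) (a i j) p * pd (ey i) θ p * pd (ey j) θ p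
            + a i j p * pd2 (ey i) (ex 0) θ p * pd (ey j) θ p
            + a i j p * pd (ey i) θ p * pd2 (ey j) (ex 0) θ p) := by
    intro i j
    rw [pd_mul_mul (hap i j) (differentiableAt_pd hθp _) (differentiableAt_pd hθp _),
      pd_mul_mul (hap i j) (differentiableAt_pd hθp _) (differentiableAt_pd hθp _),
      show pd (ey j) (pd (ex 0) θ) p = pd2 (ey j) (ex 0) θ p from pd2_comm hθp _ _]
    rfl
  simp only [hexpand]
  rw [sum_divergence_expand (fun i j => a i j p) (fun i j => pd (ey j) (a i j) p)
    (fun i j => pd (ex 0) (a i j) p) (fun i j => pd2 (ey i) (ey j) θ p)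
    (fun i => pd (ey i) θ p) (fun j => pd2 (ey j) (ex 0) θ p) (pd (ex 0) θ p)
    (fun i j => congrFun (hsym i j) p)]
  have hyoung := neg_young_sum_le (u := fun i => pd (ey i) θ p) (w := pd (ex 0) θ p)
    (mul_pos (hUx p hp) hε₀) (fun i j => haM i j p hp)
  have hmono := h4 p hp fun i => pd (ey i) θ p
  rw [mul_inv] at hyoung
  have hk : 0 ≤ 2 * lam * ν * δ := by positivity
  have := mul_le_mul_of_nonneg_left (add_le_add hyoung hmono) hk
  linarith
end
end
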